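/- arXiv:1303.0821 — 2 statements merged into one kernel-verified Lean document; each statement's English description precedes it below -/
import Mathlib

section
/- Let U ⊆ ℝ² be an open set, let g : [0,1] → ℝ² be a polygonal curve with image contained in U, and let δ > 0. Then there exists a simple (injective) curve h : [0,1] → ℝ² with image contained in U such that the Hausdorff distance between the images g([0,1]) and h([0,1]) is at most δ. (Any polygonal curve in an open planar region can be approximated arbitrarily well, in Hausdorff distance, by a simple curve in the same region.) -/
/-- A curve `g : [0,1] → ℝ²` is polygonal if there is a partition
`0 = u₀ < u₁ < … < u_k = 1` of the unit interval such that on each subinterval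
`[uᵢ, uᵢ₊₁]` the curve is an affine function of the parameter. -/
def IsPolygonal (g : unitInterval → EuclideanSpace ℝ (Fin 2)) : Prop :=
  ∃ k : ℕ, ∃ u : Fin (k + 1) → unitInterval,
    StrictMono u ∧ u 0 = 0 ∧ u (Fin.last k) = 1 ∧
    ∀ i : Fin k, ∃ a v : EuclideanSpace ℝ (Fin 2),
      ∀ t : unitInterval, u i.castSucc ≤ t → t ≤ u i.succ →
        g t = a + (t : ℝ) • v

/-!
Let `K` be the image of the curve and `V` the connected component containing `K` of the
intersection of `U` with the `δ`-neighbourhood of `K`. A simple curve in `V` through a finite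
`δ`-net of `K` is as desired, and it can be built point by point: in dimension greater than one,
removing finitely many points does not disconnect the open set `V`, so a continuous injection that
fixes the net points already visited and everything outside `V` can drag some other point of the
curve to the next net point.
-/

open Filter Metric Module Set
open scoped Topology unitInterval

section Connectedness

theorem isPreconnected_of_dense_of_locally {X : Type*} [TopologicalSpace X] {s t : Set X}
    (hs : IsPreconnected s) (hts : t ⊆ s) (hst : s ⊆ closure t)
    (hloc : ∀ x ∈ s, ∃ u ∈ 𝓝 x, IsPreconnected (u ∩ t)) : IsPreconnected t := by
  -- Points of `s` need not lie in `t`, so they are linked through their traces `𝓝[t] x` on `t`.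
  let Linked (x y : X) : Prop := ∃ c ⊆ t, IsPreconnected c ∧ c ∈ 𝓝[t] x ∧ c ∈ 𝓝[t] y
  have linked_nearby (x : X) (hx : x ∈ s) : ∀ᶠ y in 𝓝[s] x, Linked x y ∧ Linked y x := by
    obtain ⟨u, hu, hut⟩ := hloc x hx
    have inter_mem_trace {z : X} (hz : u ∈ 𝓝 z) : u ∩ t ∈ 𝓝[t] z :=
      inter_mem (mem_nhdsWithin_of_mem_nhds hz) self_mem_nhdsWithin
    filter_upwards [mem_nhdsWithin_of_mem_nhds (eventually_mem_nhds_iff.2 hu)] with y hy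
    exact ⟨⟨_, inter_subset_right, hut, inter_mem_trace hu, inter_mem_trace hy⟩,
      ⟨_, inter_subset_right, hut, inter_mem_trace hy, inter_mem_trace hu⟩⟩
  have linked_trans (x y z : X) (_ : x ∈ s) (hy : y ∈ s) (_ : z ∈ s) :
      Linked x y → Linked y z → Linked x z := by
    rintro ⟨c, hct, hc, hcx, hcy⟩ ⟨d, hdt, hd, hdy, hdz⟩
    have : (𝓝[t] y).NeBot := mem_closure_iff_nhdsWithin_neBot.1 (hst hy)
    exact ⟨c ∪ d, union_subset hct hdt, hc.union' (nonempty_of_mem (inter_mem hcy hdy)) hd,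
      mem_of_superset hcx subset_union_left, mem_of_superset hdz subset_union_right⟩
  refine isPreconnected_of_forall_pair fun x hx y hy ↦ ?_
  obtain ⟨c, hct, hc, hcx, hcy⟩ :=
    hs.induction₂' Linked linked_nearby linked_trans (hts hx) (hts hy)
  exact ⟨c, hct, mem_of_mem_nhdsWithin hx hcx, mem_of_mem_nhdsWithin hy hcy, hc⟩

variable {E : Type*} [NormedAddCommGroup E] [NormedSpace ℝ E]

theorem isPathConnected_ball_diff_of_countable (hE : 1 < Module.rank ℝ E) (x : E) {r : ℝ}
    (hr : 0 < r) {S : Set E} (hS : S.Countable) : IsPathConnected (ball x r \ S) := by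
  let φ := OpenPartialHomeomorph.univBall x r
  have φ_injective : Function.Injective φ := by
    simpa [φ, injOn_univ] using φ.injOn
  have range_φ : range φ = ball x r := by
    rw [← image_univ, ← OpenPartialHomeomorph.univBall_source x r, φ.image_source_eq_target,
      OpenPartialHomeomorph.univBall_target x hr]
  have image_φ : φ '' (φ ⁻¹' S)ᶜ = ball x r \ S := by
    rw [← preimage_compl, image_preimage_eq_range_inter, range_φ, sdiff_eq]
  rw [← image_φ]
  exact ((hS.preimage φ_injective).isPathConnected_compl_of_one_lt_rank hE).image
    (OpenPartialHomeomorph.continuous_univBall x r)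

theorem isPreconnected_diff_of_countable (hE : 1 < Module.rank ℝ E) {V S : Set E}
    (hVo : IsOpen V) (hV : IsPreconnected V) (hS : S.Countable) : IsPreconnected (V \ S) := by
  have : Nontrivial E := rank_pos_iff_nontrivial.1 (zero_lt_one.trans hE)
  refine isPreconnected_of_dense_of_locally hV sdiff_subset
    ((hS.dense_compl ℝ).open_subset_closure_inter hVo) fun x hx ↦ ?_
  obtain ⟨r, hr, hball⟩ := isOpen_iff.1 hVo x hx
  refine ⟨ball x r, ball_mem_nhds x hr, ?_⟩
  rw [← inter_sdiff_assoc, inter_eq_left.2 hball]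
  exact (isPathConnected_ball_diff_of_countable hE x hr hS).isConnected.isPreconnected

end Connectedness

section SupportedInjections

/-- A continuous injective self-map of `X` that is the identity off `W`: the substitute, in the
construction of simple curves, for a homeomorphism supported in `W`. Surjectivity is left out
because only images of simple curves are taken. -/
structure IsInjectionSupportedIn {X : Type*} [TopologicalSpace X] (W : Set X) (f : X → X) :
    Prop where
  continuous : Continuous f
  injective : Function.Injective f
  eq_self : ∀ x ∉ W, f x = x

namespace IsInjectionSupportedIn

variable {X : Type*} [TopologicalSpace X] {V W : Set X} {f f' : X → X}

theorem mono (hf : IsInjectionSupportedIn W f) (hWV : W ⊆ V) : IsInjectionSupportedIn V f :=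
  ⟨hf.continuous, hf.injective, fun x hx ↦ hf.eq_self x (notMem_subset hWV hx)⟩

theorem comp (hf' : IsInjectionSupportedIn W f') (hf : IsInjectionSupportedIn W f) :
    IsInjectionSupportedIn W (f' ∘ f) where
  continuous := hf'.continuous.comp hf.continuous
  injective := hf'.injective.comp hf.injective
  eq_self x hx := by rw [Function.comp_apply, hf.eq_self x hx, hf'.eq_self x hx]

theorem mapsTo (hf : IsInjectionSupportedIn W f) : MapsTo f W W := by
  intro x hx
  by_contra hfx
  rw [hf.injective (hf.eq_self (f x) hfx)] at hfx
  exact hfx hx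

end IsInjectionSupportedIn

variable {E : Type*} [NormedAddCommGroup E] [NormedSpace ℝ E]

/-- The map pushing the points of the ball of centre `c` and radius `r` in the direction `w`, by
an amount decreasing linearly from `r • w` at the centre to zero at the boundary. It is used to
move the centre to another point of the ball; `‖w‖ < 1` makes it injective. -/
def ballPush (c w : E) (r : ℝ) (x : E) : E :=
  x + max 0 (r - dist x c) • w

theorem ballPush_center (c w : E) {r : ℝ} (hr : 0 ≤ r) : ballPush c w r c = c + r • w := by
  simp [ballPush, hr]

theorem isInjectionSupportedIn_ballPush (c : E) {w : E} (hw : ‖w‖ < 1) (r : ℝ) :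
    IsInjectionSupportedIn (ball c r) (ballPush c w r) where
  continuous := by unfold ballPush; fun_prop
  injective x y hxy := by
    have bump_lipschitz : dist (max 0 (r - dist y c)) (max 0 (r - dist x c)) ≤ dist y x := by
      simpa using ((LipschitzWith.const r).sub (LipschitzWith.dist_left c)).const_max 0
        |>.dist_le_mul y x
    have sub_eq : x - y = (max 0 (r - dist y c) - max 0 (r - dist x c)) • w := by
      rw [sub_smul, sub_eq_sub_iff_add_eq_add]
      exact hxy.trans (add_comm _ _)
    have contraction : dist x y ≤ dist x y * ‖w‖ := by
      calc dist x y = dist (max 0 (r - dist y c)) (max 0 (r - dist x c)) * ‖w‖ := by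
            rw [dist_eq_norm x y, sub_eq, norm_smul, ← dist_eq_norm]
        _ ≤ dist x y * ‖w‖ := by rw [dist_comm x y]; gcongr
    by_contra hne
    exact contraction.not_gt (mul_lt_of_lt_one_right (dist_pos.2 hne) hw)
  eq_self x hx := by
    rw [mem_ball, not_lt] at hx
    simp [ballPush, hx]

theorem exists_isInjectionSupportedIn_ball_apply_center_eq {c p : E} {r : ℝ} (hp : p ∈ ball c r) :
    ∃ f : E → E, IsInjectionSupportedIn (ball c r) f ∧ f c = p := by
  have hr : 0 < r := pos_of_mem_ball hp
  have hw : ‖r⁻¹ • (p - c)‖ < 1 := by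
    rwa [norm_smul, norm_inv, Real.norm_of_nonneg hr.le, inv_mul_lt_one₀ hr, ← mem_ball_iff_norm]
  refine ⟨_, isInjectionSupportedIn_ballPush c hw r, ?_⟩
  rw [ballPush_center c _ hr.le, smul_inv_smul₀ hr.ne', add_sub_cancel]

theorem exists_isInjectionSupportedIn_apply_eq {W : Set E} (hWo : IsOpen W)
    (hW : IsPreconnected W) {q p : E} (hq : q ∈ W) (hp : p ∈ W) :
    ∃ f : E → E, IsInjectionSupportedIn W f ∧ f q = p := by
  refine hW.induction₂' (fun x y ↦ ∃ f : E → E, IsInjectionSupportedIn W f ∧ f x = y)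
    (fun x hx ↦ ?_) ?_ hq hp
  · obtain ⟨r, hr, hball⟩ := isOpen_iff.1 hWo x hx
    have push {a b : E} (hsub : ball a (r / 2) ⊆ W) (hb : b ∈ ball a (r / 2)) :
        ∃ f : E → E, IsInjectionSupportedIn W f ∧ f a = b :=
      let ⟨f, hf, hab⟩ := exists_isInjectionSupportedIn_ball_apply_center_eq hb
      ⟨f, hf.mono hsub, hab⟩
    filter_upwards [mem_nhdsWithin_of_mem_nhds (ball_mem_nhds x (half_pos hr))] with y hy
    have hy_sub : ball y (r / 2) ⊆ ball x r :=
      ball_subset_ball' (by linarith [mem_ball.1 hy])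
    exact ⟨push ((ball_subset_ball (half_le_self hr.le)).trans hball) hy,
      push (hy_sub.trans hball) (mem_ball_comm.1 hy)⟩
  · rintro x y z - - - ⟨f, hf, rfl⟩ ⟨f', hf', rfl⟩
    exact ⟨f' ∘ f, hf'.comp hf, rfl⟩

end SupportedInjections

section SimpleCurves

variable {E : Type*} [NormedAddCommGroup E] [NormedSpace ℝ E]

theorem exists_simple_curve_range_subset [Nontrivial E] {V : Set E} (hVo : IsOpen V)
    (hV : V.Nonempty) : ∃ h : I → E, Continuous h ∧ Function.Injective h ∧ range h ⊆ V := by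
  obtain ⟨x, hx⟩ := hV
  obtain ⟨r, hr, hball⟩ := isOpen_iff.1 hVo x hx
  have : (𝓝[≠] x).NeBot := Module.punctured_nhds_neBot ℝ E x
  obtain ⟨y, hy, hyx⟩ := (infinite_of_mem_nhds x (ball_mem_nhds x hr)).nontrivial.exists_ne x
  refine ⟨fun t ↦ AffineMap.lineMap x y (t : ℝ), by fun_prop,
    (AffineMap.lineMap_injective ℝ hyx.symm).comp Subtype.val_injective, ?_⟩
  rintro _ ⟨t, rfl⟩
  exact hball ((convex_ball x r).lineMap_mem (mem_ball_self hr) hy t.2)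

theorem exists_simple_curve_subset_range (hE : 1 < Module.rank ℝ E) {V S : Set E}
    (hVo : IsOpen V) (hV : IsConnected V) (hS : S.Finite) (hSV : S ⊆ V) :
    ∃ h : I → E, Continuous h ∧ Function.Injective h ∧ range h ⊆ V ∧ S ⊆ range h := by
  induction S, hS using Set.Finite.induction_on with
  | empty =>
    have : Nontrivial E := rank_pos_iff_nontrivial.1 (zero_lt_one.trans hE)
    simpa using exists_simple_curve_range_subset hVo hV.nonempty
  | @insert p S hpS hS ih =>
    obtain ⟨hpV, hSV⟩ := insert_subset_iff.1 hSV
    obtain ⟨h, h_cont, h_inj, hhV, hSh⟩ := ih hSV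
    have : Infinite I := (Icc_infinite zero_lt_one).to_subtype
    obtain ⟨_, ⟨t, rfl⟩, htS⟩ := (infinite_range_of_injective h_inj).exists_notMem_finite hS
    obtain ⟨f, hf, hfp⟩ := exists_isInjectionSupportedIn_apply_eq (hVo.sdiff hS.isClosed)
      (isPreconnected_diff_of_countable hE hVo hV.isPreconnected hS.countable)
      ⟨hhV (mem_range_self t), htS⟩ ⟨hpV, hpS⟩
    have f_mapsTo : MapsTo f V V := (hf.mono sdiff_subset).mapsTo
    have f_fix (x : E) (hx : x ∈ S) : f x = x := hf.eq_self x fun hxV ↦ hxV.2 hx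
    refine ⟨f ∘ h, hf.continuous.comp h_cont, hf.injective.comp h_inj,
      range_subset_iff.2 fun s ↦ f_mapsTo (hhV (mem_range_self s)), insert_subset ⟨t, hfp⟩ ?_⟩
    intro x hx
    obtain ⟨s, rfl⟩ := hSh hx
    exact ⟨s, f_fix _ hx⟩

theorem exists_simple_curve_hausdorff_approx_general (hE : 1 < Module.rank ℝ E) {U K : Set E}
    (hU : IsOpen U) (hK : TotallyBounded K) (hKc : IsConnected K) (hKU : K ⊆ U) {δ : ℝ}
    (hδ : 0 < δ) :
    ∃ h : I → E, Continuous h ∧ Function.Injective h ∧ range h ⊆ U ∧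
      hausdorffDist K (range h) ≤ δ := by
  obtain ⟨x, hx⟩ := hKc.nonempty
  set F := U ∩ thickening δ K
  have hKF : K ⊆ F := subset_inter hKU (self_subset_thickening hδ K)
  have hF : IsOpen F := hU.inter isOpen_thickening
  obtain ⟨S, hSK, hS, hKS⟩ := finite_approx_of_totallyBounded hK δ hδ
  obtain ⟨h, h_cont, h_inj, h_comp, hSh⟩ := exists_simple_curve_subset_range hE
    hF.connectedComponentIn (isConnected_connectedComponentIn_iff.2 (hKF hx)) hS
    (hSK.trans (hKc.isPreconnected.subset_connectedComponentIn hx hKF))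
  have hhF : range h ⊆ F := h_comp.trans (connectedComponentIn_subset F x)
  refine ⟨h, h_cont, h_inj, hhF.trans inter_subset_left,
    hausdorffDist_le_of_mem_dist hδ.le (fun y hy ↦ ?_) fun y hy ↦ ?_⟩
  · obtain ⟨z, hz, hyz⟩ := mem_iUnion₂.1 (hKS hy)
    exact ⟨z, hSh hz, (mem_ball.1 hyz).le⟩
  · obtain ⟨z, hz, hyz⟩ := mem_thickening_iff.1 (hhF hy).2
    exact ⟨z, hz, hyz.le⟩

end SimpleCurves

section PolygonalCurves

theorem Icc_subset_iUnion_Icc_castSucc_succ {α : Type*} [LinearOrder α] {k : ℕ}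
    (u : Fin (k + 1) → α) (hu : u 0 < u (Fin.last k)) :
    Icc (u 0) (u (Fin.last k)) ⊆ ⋃ i : Fin k, Icc (u i.castSucc) (u i.succ) := by
  rintro t ⟨ht_first, ht_last⟩
  by_contra ht
  simp only [mem_iUnion, mem_Icc, not_exists, not_and, not_le] at ht
  have le_t (j : Fin (k + 1)) : u j ≤ t := by
    induction j using Fin.induction with
    | zero => exact ht_first
    | succ i ih => exact (ht i ih).le
  cases k with
  | zero => exact hu.false
  | succ k => exact (ht (Fin.last k) (le_t _)).not_ge ht_last

theorem IsPolygonal.continuous {g : I → EuclideanSpace ℝ (Fin 2)} (hg : IsPolygonal g) :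
    Continuous g := by
  obtain ⟨k, u, -, hu0, hu1, hg_affine⟩ := hg
  refine (locallyFinite_of_finite fun i : Fin k ↦ Icc (u i.castSucc) (u i.succ)).continuous
    ?_ (fun _ ↦ isClosed_Icc) fun i ↦ ?_
  · refine eq_univ_of_forall fun t ↦ Icc_subset_iUnion_Icc_castSucc_succ u ?_ ?_
    · simp [hu0, hu1]
    · exact ⟨hu0 ▸ unitInterval.nonneg', hu1 ▸ unitInterval.le_one'⟩
  · obtain ⟨a, v, hav⟩ := hg_affine i
    have affine_cont : Continuous fun t : I ↦ a + (t : ℝ) • v := by fun_prop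
    exact affine_cont.continuousOn.congr fun t ht ↦ hav t ht.1 ht.2

end PolygonalCurves

/-- Any polygonal curve whose image lies in an open set `U ⊆ ℝ²` can
be approximated within any `δ > 0` in Hausdorff distance by a simple (injective)
curve whose image also lies in `U`. -/
theorem exists_simple_curve_hausdorff_approx
    (U : Set (EuclideanSpace ℝ (Fin 2))) (hU : IsOpen U)
    (g : unitInterval → EuclideanSpace ℝ (Fin 2)) (hg : IsPolygonal g)
    (hgU : Set.range g ⊆ U) (δ : ℝ) (hδ : 0 < δ) :
    ∃ h : unitInterval → EuclideanSpace ℝ (Fin 2),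
      Continuous h ∧ Function.Injective h ∧ Set.range h ⊆ U ∧
      Metric.hausdorffDist (Set.range g) (Set.range h) ≤ δ :=
  exists_simple_curve_hausdorff_approx_general (by simp [← finrank_eq_rank]) hU
    (isCompact_range hg.continuous).totallyBounded
    (isConnected_range hg.continuous) hgU hδ
end

section
/- Let U ⊆ ℝ² be an open set and let f : [0,1] → ℝ² be a polygonal curve. Then the infimum, over all simple (injective) polygonal curves h : [0,1] → ℝ² with image contained in U, of the Hausdorff distance between f([0,1]) and h([0,1]) equals the infimum, over all polygonal curves g : [0,1] → ℝ² with image contained in U, of the Hausdorff distance between f([0,1]) and g([0,1]). (Under the Hausdorff distance, the simple curve embedding problem and the unrestricted curve embedding problem have the same optimal value.) -/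
/-!
Any continuous curve in a normed space of finite dimension at least two is Hausdorff-close to a
simple polygonal one. Choose closely spaced points `p 0, …, p n` along the curve, start with a short
segment near `p 0`, and repeatedly grow a finger: once the simple curve comes close to `p n` at a
parameter `τ`, apply an injective piecewise linear map of the whole space which carries that point
of the curve to a point near `p (n + 1)`, moves nothing far from it, and fixes the finitely many
points of the curve already seen to be close to `p 0, …, p n`. Such a map is a tent-shaped push in a
direction `w`, and a generic `w` avoids the chords from the pushed point to the points to be fixed.
-/

open Filter Set Topology unitInterval

section RayAffine

variable {E F G : Type*} [AddCommGroup E] [Module ℝ E] [AddCommGroup F] [Module ℝ F]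
  [AddCommGroup G] [Module ℝ G]

/-- A map between real vector spaces is *ray-affine* if from every point, in every direction, it is
affine along a short enough initial segment of the ray. This weak form of piecewise linearity needs
no triangulation and is visibly stable under composition. -/
def IsRayAffine (f : E → F) : Prop :=
  ∀ x d, ∃ v, ∀ᶠ ε in 𝓝[>] (0 : ℝ), f (x + ε • d) = f x + ε • v

namespace IsRayAffine

theorem of_linear (L : E →ₗ[ℝ] F) : IsRayAffine L :=
  fun x d ↦ ⟨L d, .of_forall fun ε ↦ by rw [map_add, map_smul]⟩

protected theorem id : IsRayAffine fun x : E ↦ x :=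
  of_linear LinearMap.id

protected theorem const (c : F) : IsRayAffine fun _ : E ↦ c :=
  fun _ _ ↦ ⟨0, .of_forall fun _ ↦ by simp⟩

protected theorem comp {g : F → G} {f : E → F} (hg : IsRayAffine g) (hf : IsRayAffine f) :
    IsRayAffine fun x ↦ g (f x) := by
  intro x d
  obtain ⟨v, hv⟩ := hf x d
  obtain ⟨w, hw⟩ := hg (f x) v
  exact ⟨w, by filter_upwards [hv, hw] with ε hfε hgε using by rw [hfε, hgε]⟩

protected theorem add {f g : E → F} (hf : IsRayAffine f) (hg : IsRayAffine g) :
    IsRayAffine fun x ↦ f x + g x := by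
  intro x d
  obtain ⟨v, hv⟩ := hf x d
  obtain ⟨w, hw⟩ := hg x d
  refine ⟨v + w, ?_⟩
  filter_upwards [hv, hw] with ε hfε hgε
  rw [hfε, hgε, smul_add, add_add_add_comm]

protected theorem neg {f : E → F} (hf : IsRayAffine f) : IsRayAffine fun x ↦ -f x :=
  (of_linear (-LinearMap.id : F →ₗ[ℝ] F)).comp hf

protected theorem sub {f g : E → F} (hf : IsRayAffine f) (hg : IsRayAffine g) :
    IsRayAffine fun x ↦ f x - g x := by
  simpa only [sub_eq_add_neg] using hf.add hg.neg

protected theorem sum {ι : Type*} {f : ι → E → F} (s : Finset ι) (hf : ∀ i ∈ s, IsRayAffine (f i)) :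
    IsRayAffine fun x ↦ ∑ i ∈ s, f i x := by
  classical
  induction s using Finset.induction_on with
  | empty => simpa only [Finset.sum_empty] using .const 0
  | insert i s hi ih =>
    simp only [Finset.sum_insert hi]
    exact (hf i (s.mem_insert_self i)).add (ih fun j hj ↦ hf j (Finset.mem_insert_of_mem hj))

theorem smul_const {f : E → ℝ} (hf : IsRayAffine f) (v : F) : IsRayAffine fun x ↦ f x • v :=
  (of_linear (LinearMap.toSpanSingleton ℝ F v)).comp hf

theorem const_mul {f : E → ℝ} (c : ℝ) (hf : IsRayAffine f) : IsRayAffine fun x ↦ c * f x :=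
  (of_linear (LinearMap.mulLeft ℝ c)).comp hf

protected theorem max {f g : E → ℝ} (hf : IsRayAffine f) (hg : IsRayAffine g) :
    IsRayAffine fun x ↦ max (f x) (g x) := by
  have max_of_lt {f g : E → ℝ} (hf : IsRayAffine f) (hg : IsRayAffine g) {x : E} (d : E)
      (hlt : f x < g x) :
      ∃ v, ∀ᶠ ε in 𝓝[>] (0 : ℝ), max (f (x + ε • d)) (g (x + ε • d))
        = max (f x) (g x) + ε • v := by
    obtain ⟨v, hv⟩ := hf x d
    obtain ⟨w, hw⟩ := hg x d
    have hlt_near : ∀ᶠ ε in 𝓝[>] (0 : ℝ), f x + ε • v < g x + ε • w := by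
      refine nhdsWithin_le_nhds (ContinuousAt.eventually_lt ?_ ?_ (by simpa using hlt)) <;> fun_prop
    refine ⟨w, ?_⟩
    filter_upwards [hv, hw, hlt_near] with ε hfε hgε hε
    rw [hfε, hgε, max_eq_right hε.le, max_eq_right hlt.le]
  intro x d
  rcases lt_trichotomy (f x) (g x) with hlt | heq | hgt
  · exact max_of_lt hf hg d hlt
  · obtain ⟨v, hv⟩ := hf x d
    obtain ⟨w, hw⟩ := hg x d
    refine ⟨max v w, ?_⟩
    filter_upwards [hv, hw, self_mem_nhdsWithin] with ε hfε hgε hε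
    rw [hfε, hgε, heq, max_self, max_add_add_left, smul_eq_mul, smul_eq_mul, smul_eq_mul,
      mul_max_of_nonneg _ _ (mem_Ioi.1 hε).le]
  · simpa only [max_comm] using max_of_lt hg hf d hgt

protected theorem abs {f : E → ℝ} (hf : IsRayAffine f) : IsRayAffine fun x ↦ |f x| :=
  hf.max hf.neg

theorem exists_eqOn_Icc {g : ℝ → E} (hg : IsRayAffine g) (t : ℝ) :
    ∃ δ > 0, (∃ a v : E, ∀ s ∈ Icc (t - δ) t, g s = a + s • v) ∧
      ∃ a v : E, ∀ s ∈ Icc t (t + δ), g s = a + s • v := by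
  obtain ⟨v, hv⟩ := hg t 1
  obtain ⟨w, hw⟩ := hg t (-1)
  obtain ⟨δ, hδ, hvw⟩ := mem_nhdsGT_iff_exists_Ioc_subset.1 (hv.and hw)
  refine ⟨δ, hδ, ⟨g t + t • w, -w, fun s hs ↦ ?_⟩, g t - t • v, v, fun s hs ↦ ?_⟩
  · rcases hs.2.eq_or_lt with rfl | hst
    · simp
    · have := (hvw (show t - s ∈ Ioc 0 δ from ⟨by linarith, by linarith [hs.1]⟩)).2
      rw [smul_eq_mul, mul_neg_one, neg_sub, add_sub_cancel] at this
      rw [this]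
      module
  · rcases hs.1.eq_or_lt with rfl | hts
    · simp
    · have := (hvw (show s - t ∈ Ioc 0 δ from ⟨by linarith, by linarith [hs.2]⟩)).1
      rw [smul_eq_mul, mul_one, add_sub_cancel] at this
      rw [this]
      module

protected theorem continuous {E : Type*} [NormedAddCommGroup E] [NormedSpace ℝ E] {g : ℝ → E}
    (hg : IsRayAffine g) : Continuous g := by
  refine continuous_iff_continuousAt.2 fun t ↦ ?_
  obtain ⟨δ, hδ, ⟨a, v, hl⟩, b, w, hr⟩ := hg.exists_eqOn_Icc t
  have affine_continuousOn (c u : E) (s : Set ℝ) : ContinuousOn (fun x : ℝ ↦ c + x • u) s := by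
    fun_prop
  have hcont : ContinuousOn g (Icc (t - δ) t ∪ Icc t (t + δ)) :=
    ((affine_continuousOn a v _).congr hl).union_of_isClosed ((affine_continuousOn b w _).congr hr)
      isClosed_Icc isClosed_Icc
  rw [Icc_union_Icc_eq_Icc (by linarith) (by linarith)] at hcont
  exact hcont.continuousAt (Icc_mem_nhds (by linarith) (by linarith))

end IsRayAffine

end RayAffine

section PolygonalCurve

/-- Polygonal curves `[0,1] → E` in an arbitrary real vector space, encoded as in `IsPolygonal`,
which is the case of the Euclidean plane. -/
def IsPolygonalCurve {E : Type*} [AddCommGroup E] [Module ℝ E] (g : I → E) : Prop :=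
  ∃ k : ℕ, ∃ u : Fin (k + 1) → I, StrictMono u ∧ u 0 = 0 ∧ u (Fin.last k) = 1 ∧
    ∀ i : Fin k, ∃ a v : E, ∀ t : I, u i.castSucc ≤ t → t ≤ u i.succ → g t = a + (t : ℝ) • v

theorem IsPolygonalCurve.continuous {E : Type*} [NormedAddCommGroup E] [NormedSpace ℝ E]
    {g : I → E} (hg : IsPolygonalCurve g) : Continuous g := by
  obtain ⟨k, u, hu, hu0, hu1, haff⟩ := hg
  have hcont (i : Fin (k + 1)) : ContinuousOn g (Icc 0 (u i)) := by
    induction i using Fin.induction with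
    | zero => simp [hu0]
    | succ i ih =>
      obtain ⟨a, v, hav⟩ := haff i
      have hpiece : ContinuousOn g (Icc (u i.castSucc) (u i.succ)) :=
        ContinuousOn.congr (f := fun t : I ↦ a + (t : ℝ) • v) (by fun_prop)
          fun t ht ↦ hav t ht.1 ht.2
      rw [← Icc_union_Icc_eq_Icc nonneg' (hu.monotone i.castSucc_le_succ)]
      exact ih.union_of_isClosed hpiece isClosed_Icc isClosed_Icc
  refine continuousOn_univ.1 ((hcont (Fin.last k)).mono fun t _ ↦ ?_)
  exact ⟨nonneg', hu1 ▸ le_one'⟩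

theorem isPolygonalCurve_of_finite_breakpoints {E : Type*} [AddCommGroup E] [Module ℝ E]
    {g : I → E} (S : Finset I)
    (hS : ∀ x y : I, x < y → (∀ s ∈ S, s ≤ x ∨ y ≤ s) →
      ∃ a v : E, ∀ t : I, x ≤ t → t ≤ y → g t = a + (t : ℝ) • v) :
    IsPolygonalCurve g := by
  classical
  set T : Finset I := insert 0 (insert 1 S) with hT
  obtain ⟨k, hk⟩ : ∃ k, T.card = k + 1 :=
    Nat.exists_eq_succ_of_ne_zero (Finset.card_ne_zero_of_mem (Finset.mem_insert_self 0 _))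
  set u := T.orderEmbOfFin hk
  have exists_index {s : I} (hs : s ∈ T) : ∃ j, u j = s := by
    rwa [← Finset.mem_coe, ← Finset.range_orderEmbOfFin T hk] at hs
  refine ⟨k, u, u.strictMono, ?_, ?_, fun i ↦ hS _ _ (u.strictMono i.castSucc_lt_succ) ?_⟩
  · obtain ⟨j, hj⟩ := exists_index (s := 0) (by simp [hT])
    exact le_antisymm (hj ▸ u.monotone j.zero_le) nonneg'
  · obtain ⟨j, hj⟩ := exists_index (s := 1) (by simp [hT])
    exact le_antisymm le_one' (hj ▸ u.monotone j.le_last)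
  · intro s hs
    obtain ⟨j, rfl⟩ := exists_index (s := s) (by simp [hT, hs])
    exact (lt_or_ge j i.succ).imp (fun hj ↦ u.monotone (Fin.le_castSucc_iff.2 hj)) (u.monotone ·)

theorem exists_lt_mem_Ico_succ {α : Type*} [LinearOrder α] {u : ℕ → α} {x : α} {n : ℕ}
    (h0 : u 0 ≤ x) (hn : x < u n) : ∃ k < n, x ∈ Ico (u k) (u (k + 1)) := by
  induction n with
  | zero => exact absurd hn h0.not_gt
  | succ n ih =>
    rcases lt_or_ge x (u n) with hx | hx
    · obtain ⟨k, hk, hxk⟩ := ih hx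
      exact ⟨k, hk.trans n.lt_succ_self, hxk⟩
    · exact ⟨n, n.lt_succ_self, hx, hn⟩

theorem IsRayAffine.isPolygonalCurve {E : Type*} [AddCommGroup E] [Module ℝ E] {g : ℝ → E}
    (hg : IsRayAffine g) : IsPolygonalCurve fun t : I ↦ g t := by
  classical
  choose δ hδ hleft hright using hg.exists_eqOn_Icc
  obtain ⟨u, hu0, -, ⟨n, hn⟩, hcover⟩ := exists_monotone_Icc_subset_open_cover_unitInterval
    (c := fun t : I ↦ Metric.ball t (δ t)) (fun _ ↦ Metric.isOpen_ball)
    fun t _ ↦ mem_iUnion_of_mem t (Metric.mem_ball_self (hδ t))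
  choose c hc using hcover
  refine isPolygonalCurve_of_finite_breakpoints
    ((Finset.range (n + 1)).image u ∪ (Finset.range n).image c) fun x y hxy hS ↦ ?_
  obtain ⟨k, hkn, hxk⟩ := exists_lt_mem_Ico_succ (u := u) (x := x) (n := n)
    (hu0 ▸ nonneg') (hn n le_rfl ▸ hxy.trans_le le_one')
  have hyk : y ≤ u (k + 1) := (hS (u (k + 1)) (by grind)).resolve_left hxk.2.not_ge
  have near_center {t : I} (hxt : x ≤ t) (hty : t ≤ y) : |(t : ℝ) - c k| < δ (c k) :=
    hc k ⟨hxk.1.trans hxt, hty.trans hyk⟩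
  rcases hS (c k) (by grind) with hcx | hyc
  · obtain ⟨a, v, hav⟩ := hright (c k)
    exact ⟨a, v, fun t hxt hty ↦ hav t ⟨hcx.trans hxt, by
      linarith [abs_lt.1 (near_center hxt hty)]⟩⟩
  · obtain ⟨a, v, hav⟩ := hleft (c k)
    exact ⟨a, v, fun t hxt hty ↦ hav t ⟨by
      linarith [abs_lt.1 (near_center hxt hty)], hty.trans hyc⟩⟩

end PolygonalCurve

section Push

variable {E : Type*} [NormedAddCommGroup E] [NormedSpace ℝ E]

/-- The push by `w` near `P` with profile `ρ`: the translation by `w` at `P`, tapering off to the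
identity where `ρ (z - P)` reaches `1`. -/
noncomputable def push (P w : E) (ρ : E → ℝ) (z : E) : E :=
  z + max 0 (1 - ρ (z - P)) • w

theorem IsRayAffine.push {ρ : E → ℝ} (hρ : IsRayAffine ρ) (P w : E) :
    IsRayAffine (push P w ρ) :=
  .add .id <| .smul_const (.max (.const 0) (.sub (.const 1) (hρ.comp (.sub .id (.const P))))) w

theorem push_self {ρ : E → ℝ} (hρ : ρ 0 = 0) (P w : E) : push P w ρ P = P + w := by
  simp [push, hρ]

theorem push_eq_self {P z : E} (w : E) {ρ : E → ℝ} (hz : 1 ≤ ρ (z - P)) : push P w ρ z = z := by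
  simp [push, max_eq_left (sub_nonpos.2 hz)]

theorem push_injective {ρ : E → ℝ} (P : E) {w : E} {c : ℝ} (hc : c < 1)
    (hρ : ∀ (z : E) (d : ℝ), |ρ (z + d • w) - ρ z| ≤ c * |d|) :
    Function.Injective (push P w ρ) := by
  intro z z' hzz'
  set d : ℝ := max 0 (1 - ρ (z - P)) - max 0 (1 - ρ (z' - P)) with hd
  have hz' : z' = z + d • w := by
    rw [hd, sub_smul, ← add_sub_assoc, eq_sub_iff_add_eq]
    exact hzz'.symm
  have hdc : |d| ≤ c * |d| := calc
    |d| ≤ |(1 - ρ (z - P)) - (1 - ρ (z' - P))| := by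
      simpa using abs_max_sub_max_le_max 0 (1 - ρ (z - P)) 0 (1 - ρ (z' - P))
    _ = |ρ (z - P + d • w) - ρ (z - P)| := by
      rw [sub_sub_sub_cancel_left, hz', add_sub_right_comm]
    _ ≤ c * |d| := hρ _ _
  have hd0 : d = 0 := abs_nonpos_iff.1 (by nlinarith)
  rw [hz', hd0, zero_smul, add_zero]

theorem push_eq_self_or_dist_le {ρ : E → ℝ} {R : ℝ} (hρ0 : ∀ z, 0 ≤ ρ z)
    (hρ : ∀ z, ρ z < 1 → ‖z‖ ≤ R) (P w z : E) :
    push P w ρ z = z ∨ dist (push P w ρ z) P ≤ R + ‖w‖ := by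
  rcases le_or_gt 1 (ρ (z - P)) with hz | hz
  · exact .inl (push_eq_self w hz)
  · right
    have hmax : max 0 (1 - ρ (z - P)) ≤ 1 := max_le zero_le_one (by linarith [hρ0 (z - P)])
    calc dist (push P w ρ z) P = ‖(z - P) + max 0 (1 - ρ (z - P)) • w‖ := by
          rw [dist_eq_norm, push, add_sub_right_comm]
      _ ≤ ‖z - P‖ + max 0 (1 - ρ (z - P)) * ‖w‖ := by
          refine (norm_add_le _ _).trans_eq ?_
          rw [norm_smul, Real.norm_of_nonneg (le_max_left _ _)]
      _ ≤ R + ‖w‖ := add_le_add (hρ _ hz) (mul_le_of_le_one_left (norm_nonneg w) hmax)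

variable [FiniteDimensional ℝ E]

variable (E) in
theorem exists_isRayAffine_norm_le : ∃ N : E → ℝ, IsRayAffine N ∧ N 0 = 0 ∧ ∀ z, ‖z‖ ≤ N z := by
  let b := Module.finBasis ℝ E
  refine ⟨fun z ↦ ∑ i, |(‖b i‖ • b.coord i) z|, .sum _ fun i _ ↦ (IsRayAffine.of_linear _).abs,
    by simp, fun z ↦ ?_⟩
  calc ‖z‖ = ‖∑ i, b.repr z i • b i‖ := by rw [b.sum_repr]
    _ ≤ ∑ i, ‖b.repr z i • b i‖ := norm_sum_le _ _
    _ = ∑ i, |(‖b i‖ • b.coord i) z| := by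
      simp [norm_smul, abs_mul, mul_comm]

-- With `ℓ w = 1`, slope `1/2` along `w` makes the push injective, while a steep slope `M`
-- transversally keeps the support clear of `F`.
theorem exists_push_profile {w : E} (hw : w ≠ 0) (F : Finset E)
    (hF : ∀ x ∈ F, x ∉ Submodule.span ℝ {w}) :
    ∃ ρ : E → ℝ, IsRayAffine ρ ∧ ρ 0 = 0 ∧ (∀ z, 0 ≤ ρ z) ∧
      (∀ (z : E) (d : ℝ), |ρ (z + d • w) - ρ z| ≤ 1 / 2 * |d|) ∧
      (∀ x ∈ F, 1 ≤ ρ x) ∧ ∀ z, ρ z < 1 → ‖z‖ ≤ 3 * ‖w‖ := by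
  obtain ⟨N, hN, hN0, hle⟩ := exists_isRayAffine_norm_le E
  obtain ⟨ℓ, hℓ⟩ := SeparatingDual.exists_eq_one (R := ℝ) hw
  have hNnonneg (z : E) : 0 ≤ N z := (norm_nonneg z).trans (hle z)
  have hNpos {x : E} (hx : x ∈ F) : 0 < N (x - ℓ x • w) := by
    refine (norm_pos_iff.2 (sub_ne_zero.2 fun hxw ↦ hF x hx ?_)).trans_le (hle _)
    exact Submodule.mem_span_singleton.2 ⟨ℓ x, hxw.symm⟩
  have one_le_mul {a : ℝ} (ha : 0 < a) : ∀ᶠ M : ℝ in atTop, 1 ≤ M * a :=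
    (tendsto_id.atTop_mul_const ha).eventually_ge_atTop 1
  obtain ⟨M, ⟨hMw, hMF⟩, hM⟩ := (((one_le_mul (norm_pos_iff.2 hw)).and
    ((eventually_all_finset F).2 fun x hx ↦ one_le_mul (hNpos hx))).and
      (eventually_gt_atTop 0)).exists
  refine ⟨fun z ↦ 1 / 2 * |ℓ z| + M * N (z - ℓ z • w), ?_, by simp [hN0], fun z ↦ ?_,
    fun z d ↦ ?_, fun x hx ↦ ?_, fun z hz ↦ ?_⟩
  · have hℓ_ray : IsRayAffine fun z ↦ ℓ z := .of_linear ℓ.toLinearMap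
    exact (hℓ_ray.abs.const_mul _).add ((hN.comp (.sub .id (hℓ_ray.smul_const w))).const_mul M)
  · have := hNnonneg (z - ℓ z • w)
    positivity
  · have hproj : z + d • w - ℓ (z + d • w) • w = z - ℓ z • w := by
      simp only [map_add, map_smul, hℓ, smul_eq_mul, mul_one]
      module
    simp only [hproj]
    rw [add_sub_add_right_eq_sub, ← mul_sub, abs_mul, abs_of_pos one_half_pos]
    refine mul_le_mul_of_nonneg_left ?_ one_half_pos.le
    simpa [hℓ] using abs_abs_sub_abs_le (ℓ z + d) (ℓ z)
  · exact (hMF x hx).trans (le_add_of_nonneg_left (by positivity))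
  · have hMN : 0 ≤ M * N (z - ℓ z • w) := mul_nonneg hM.le (hNnonneg _)
    have hℓz : |ℓ z| ≤ 2 := by linarith
    have hNz : N (z - ℓ z • w) ≤ ‖w‖ := by
      refine le_of_mul_le_mul_left ?_ hM
      linarith [abs_nonneg (ℓ z)]
    calc ‖z‖ ≤ ‖z - ℓ z • w‖ + |ℓ z| * ‖w‖ := by
          simpa [norm_smul] using norm_add_le (z - ℓ z • w) (ℓ z • w)
      _ ≤ ‖w‖ + 2 * ‖w‖ := by
          gcongr
          exact (hle _).trans hNz
      _ = 3 * ‖w‖ := by ring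

theorem exists_push {P w : E} (hw : w ≠ 0) (F : Finset E)
    (hF : ∀ x ∈ F, x - P ∉ Submodule.span ℝ {w}) :
    ∃ φ : E → E, IsRayAffine φ ∧ Function.Injective φ ∧ φ P = P + w ∧ (∀ x ∈ F, φ x = x) ∧
      ∀ z, φ z = z ∨ dist (φ z) P ≤ 4 * ‖w‖ := by
  classical
  obtain ⟨ρ, hρ, hρ0, hnonneg, hlip, hone, hsupp⟩ :=
    exists_push_profile hw (F.image (· - P)) (by simpa using hF)
  refine ⟨push P w ρ, hρ.push P w, push_injective P one_half_lt_one hlip, push_self hρ0 P w,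
    fun x hx ↦ push_eq_self w (hone _ (Finset.mem_image_of_mem _ hx)), fun z ↦ ?_⟩
  convert push_eq_self_or_dist_le hnonneg hsupp P w z using 2
  ring

theorem dense_compl_biUnion_span_singleton (hE : 1 < Module.finrank ℝ E) {s : Set E}
    (hs : s.Countable) : Dense (⋃ v ∈ s, (Submodule.span ℝ {v} : Set E))ᶜ := by
  have dimH_span_le (v : E) : dimH (Submodule.span ℝ {v} : Set E) ≤ 1 := by
    have hline : ContDiff ℝ 1 fun c : ℝ ↦ c • v := by fun_prop
    simpa [Submodule.span_singleton_eq_range] using hline.dimH_range_le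
  refine dense_compl_of_dimH_lt_finrank (lt_of_le_of_lt ?_ (Nat.one_lt_cast.2 hE))
  rw [dimH_bUnion hs]
  exact iSup₂_le fun v _ ↦ dimH_span_le v

end Push

section SimpleApproximation

variable {E : Type*} [NormedAddCommGroup E] [NormedSpace ℝ E] [FiniteDimensional ℝ E]

theorem IsRayAffine.exists_reroute (hE : 1 < Module.finrank ℝ E) {H : ℝ → E} (hH : IsRayAffine H)
    (hinj : Function.Injective H) (T : Finset ℝ) {τ : ℝ} (hτ : τ ∉ T) (q : E) {r : ℝ}
    (hr : 0 < r) :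
    ∃ H' : ℝ → E, IsRayAffine H' ∧ Function.Injective H' ∧ (∀ t ∈ T, H' t = H t) ∧
      dist (H' τ) q < r ∧ ∀ s, H' s = H s ∨ dist (H' s) (H τ) < 4 * (dist q (H τ) + r) := by
  classical
  set V : Set E := insert 0 ((fun t ↦ H t - H τ) '' T)
  obtain ⟨w, hwV, hwq⟩ := (dense_compl_biUnion_span_singleton hE (s := V)
    ((T.countable_toSet.image _).insert 0)).exists_dist_lt (q - H τ) hr
  have notMem_span {v : E} (hv : v ∈ V) : w ∉ Submodule.span ℝ {v} :=
    fun h ↦ hwV (mem_biUnion hv h)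
  have hw0 : w ≠ 0 := by simpa using notMem_span (mem_insert 0 _)
  have chord_notMem {t : ℝ} (ht : t ∈ T) : H t - H τ ∉ Submodule.span ℝ {w} := by
    intro h
    have hne : H t - H τ ≠ 0 := sub_ne_zero.2 (hinj.ne (ne_of_mem_of_not_mem ht hτ))
    obtain ⟨c, hc⟩ := Submodule.mem_span_singleton.1 h
    have hc0 : c ≠ 0 := fun h0 ↦ hne (by rw [← hc, h0, zero_smul])
    exact notMem_span (mem_insert_of_mem _ (mem_image_of_mem _ ht))
      (Submodule.mem_span_singleton.2 ⟨c⁻¹, by simp [← hc, hc0]⟩)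
  obtain ⟨φ, hφ, hφinj, hφτ, hφT, hφmove⟩ := exists_push (P := H τ) hw0 (T.image H)
    (Finset.forall_mem_image.2 fun t ht ↦ chord_notMem ht)
  refine ⟨fun s ↦ φ (H s), hφ.comp hH, hφinj.comp hinj,
    fun t ht ↦ hφT _ (Finset.mem_image_of_mem H ht), ?_,
    fun s ↦ (hφmove (H s)).imp_right fun hs ↦ ?_⟩
  · calc dist (φ (H τ)) q = dist (q - H τ) w := by
          rw [hφτ, dist_comm, dist_eq_norm, dist_eq_norm, sub_sub]
      _ < r := hwq
  · have hw_lt : ‖w‖ < dist q (H τ) + r := by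
      rw [dist_eq_norm] at hwq ⊢
      linarith [norm_le_norm_add_norm_sub (q - H τ) w]
    linarith

theorem exists_isRayAffine_injective_near_chain (hE : 1 < Module.finrank ℝ E) (p : ℕ → E) {r : ℝ}
    (hp : ∀ i, dist (p i) (p (i + 1)) < r) (n : ℕ) :
    ∃ H : ℝ → E, IsRayAffine H ∧ Function.Injective H ∧
      (∀ s : I, ∃ i, dist (H s) (p i) < 13 * r) ∧ ∀ i ≤ n, ∃ t : I, dist (H t) (p i) < r := by
  have hr : 0 < r := dist_nonneg.trans_lt (hp 0)
  induction n with
  | zero =>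
    have := Module.nontrivial_of_finrank_pos (zero_lt_one.trans hE)
    obtain ⟨e, he⟩ := exists_norm_eq E hr.le
    have he0 : e ≠ 0 := norm_pos_iff.1 (he ▸ hr)
    refine ⟨fun t ↦ p 0 + t • e, .add (.const _) (IsRayAffine.id.smul_const e),
      (add_right_injective _).comp (smul_left_injective ℝ he0), fun s ↦ ⟨0, ?_⟩, fun i hi ↦ ⟨0, ?_⟩⟩
    · rw [dist_self_add_left, norm_smul, he, Real.norm_of_nonneg s.2.1]
      nlinarith [s.2.2]
    · simpa [Nat.le_zero.1 hi] using hr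
  | succ n ih =>
    obtain ⟨H, hH, hinj, hnear, hvisit⟩ := ih
    choose! t ht using hvisit
    obtain ⟨τ, hτ, hτT⟩ : ∃ τ : I, dist (H τ) (p n) < r ∧ τ ∉ (Finset.range (n + 1)).image t := by
      have hcont := hH.continuous
      have hopen : IsOpen {τ : I | dist (H τ) (p n) < r} := isOpen_lt (by fun_prop) (by fun_prop)
      exact (infinite_of_mem_nhds (t n) (hopen.mem_nhds (ht n le_rfl))).exists_notMem_finset _
    obtain ⟨H', hH', hinj', hfix, hq, hmove⟩ := hH.exists_reroute hE hinj
      (((Finset.range (n + 1)).image t).image (↑)) (τ := τ)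
      (by simpa only [Finset.mem_image, SetCoe.ext_iff, exists_eq_right] using hτT) (p (n + 1)) hr
    have hstep : dist (p (n + 1)) (H τ) < 2 * r := by
      linarith [dist_triangle_right (p (n + 1)) (H τ) (p n), dist_comm (p n) (p (n + 1)), hp n]
    refine ⟨H', hH', hinj', fun s ↦ ?_, fun i hi ↦ ?_⟩
    · rcases hmove s with hs | hs
      · exact hs ▸ hnear s
      · exact ⟨n, by linarith [dist_triangle (H' s) (H τ) (p n)]⟩
    · rcases Nat.le_succ_iff.1 hi with hin | rfl
      · refine ⟨t i, ?_⟩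
        rw [hfix _ (by grind)]
        exact ht i hin
      · exact ⟨τ, hq⟩

theorem exists_isPolygonalCurve_injective_near (hE : 1 < Module.finrank ℝ E) {g : I → E}
    (hg : Continuous g) {ε : ℝ} (hε : 0 < ε) :
    ∃ h : I → E, IsPolygonalCurve h ∧ Function.Injective h ∧
      (∀ s, ∃ t, dist (h s) (g t) < ε) ∧ ∀ t, ∃ s, dist (g t) (h s) < ε := by
  obtain ⟨u, hu0, hmono, ⟨n, hn⟩, hcover⟩ := exists_monotone_Icc_subset_open_cover_unitInterval
    (c := fun y ↦ {x | dist (g x) (g y) < ε / 26}) (fun y ↦ isOpen_lt (by fun_prop) (by fun_prop))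
    fun y _ ↦ mem_iUnion_of_mem y (by simpa using hε)
  have hpiece (k : ℕ) {x : I} (hx : x ∈ Icc (u k) (u (k + 1))) : dist (g (u k)) (g x) < ε / 13 := by
    obtain ⟨y, hy⟩ := hcover k
    have hk : dist (g (u k)) (g y) < ε / 26 := hy (left_mem_Icc.2 (hmono k.le_succ))
    have hx : dist (g x) (g y) < ε / 26 := hy hx
    linarith [dist_triangle_right (g (u k)) (g x) (g y)]
  obtain ⟨H, hH, hinj, hnear, hvisit⟩ := exists_isRayAffine_injective_near_chain hE (g ∘ u)
    (fun k ↦ hpiece k (right_mem_Icc.2 (hmono k.le_succ))) n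
  refine ⟨fun t ↦ H t, hH.isPolygonalCurve, hinj.comp Subtype.val_injective, fun s ↦ ?_,
    fun x ↦ ?_⟩
  · obtain ⟨i, hi⟩ := hnear s
    exact ⟨u i, hi.trans_eq (by ring)⟩
  · obtain ⟨k, hkn, hxk⟩ : ∃ k ≤ n, dist (g (u k)) (g x) < ε / 13 := by
      rcases (le_one' : x ≤ 1).eq_or_lt with rfl | hx
      · exact ⟨n, le_rfl, by simpa [hn n le_rfl] using hε⟩
      · obtain ⟨k, hkn, hxk⟩ := exists_lt_mem_Ico_succ (u := u)
          (hu0 ▸ nonneg') (hn n le_rfl ▸ hx)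
        exact ⟨k, hkn.le, hpiece k (Ico_subset_Icc_self hxk)⟩
    obtain ⟨s, hs⟩ := hvisit k hkn
    exact ⟨s, by
      linarith [dist_triangle (g x) (g (u k)) (H s), dist_comm (g x) (g (u k)),
        dist_comm (g (u k)) (H s), show dist (H s) (g (u k)) < ε / 13 from hs]⟩

theorem exists_isPolygonalCurve_injective_hausdorffDist_le (hE : 1 < Module.finrank ℝ E) {U : Set E}
    (hU : IsOpen U) {g : I → E} (hg : Continuous g) (hgU : range g ⊆ U) {ε : ℝ} (hε : 0 < ε) :
    ∃ h : I → E, IsPolygonalCurve h ∧ Function.Injective h ∧ range h ⊆ U ∧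
      Metric.hausdorffDist (range g) (range h) ≤ ε := by
  obtain ⟨δ, hδ, hδU⟩ := (isCompact_range hg).exists_thickening_subset_open hU hgU
  obtain ⟨h, hpoly, hinj, hhg, hgh⟩ :=
    exists_isPolygonalCurve_injective_near hE hg (lt_min hδ hε)
  refine ⟨h, hpoly, hinj, ?_, Metric.hausdorffDist_le_of_mem_dist hε.le ?_ ?_⟩
  · rintro _ ⟨s, rfl⟩
    obtain ⟨t, ht⟩ := hhg s
    exact hδU (Metric.mem_thickening_iff.2 ⟨g t, mem_range_self t, ht.trans_le (min_le_left _ _)⟩)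
  · rintro _ ⟨t, rfl⟩
    obtain ⟨s, hs⟩ := hgh t
    exact ⟨h s, mem_range_self s, hs.le.trans (min_le_right _ _)⟩
  · rintro _ ⟨s, rfl⟩
    obtain ⟨t, ht⟩ := hhg s
    exact ⟨g t, mem_range_self t, ht.le.trans (min_le_right _ _)⟩

end SimpleApproximation

theorem sInf_eq_sInf_of_subset_of_forall_exists_le_add {A B : Set ℝ} (hAB : A ⊆ B)
    (hB : BddBelow B) (happrox : ∀ b ∈ B, ∀ ε > 0, ∃ a ∈ A, a ≤ b + ε) : sInf A = sInf B := by
  rcases B.eq_empty_or_nonempty with rfl | ⟨b₀, hb₀⟩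
  · rw [subset_empty_iff.1 hAB]
  obtain ⟨a₀, ha₀, -⟩ := happrox b₀ hb₀ 1 one_pos
  refine le_antisymm (le_csInf ⟨b₀, hb₀⟩ fun b hb ↦ le_of_forall_pos_le_add fun ε hε ↦ ?_)
    (csInf_le_csInf hB ⟨a₀, ha₀⟩ hAB)
  obtain ⟨a, ha, hab⟩ := happrox b hb ε hε
  exact (csInf_le (hB.mono hAB) ha).trans hab

theorem simple_curve_embedding_hausdorff_eq_general {E : Type*} [NormedAddCommGroup E]
    [NormedSpace ℝ E] [FiniteDimensional ℝ E] (hE : 1 < Module.finrank ℝ E) {U : Set E}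
    (hU : IsOpen U) {K : Set E} (hK : Bornology.IsBounded K) (hK_nonempty : K.Nonempty) :
    sInf {e : ℝ | ∃ h : I → E, IsPolygonalCurve h ∧ Function.Injective h ∧ range h ⊆ U ∧
        e = Metric.hausdorffDist K (range h)} =
    sInf {e : ℝ | ∃ g : I → E, IsPolygonalCurve g ∧ range g ⊆ U ∧
        e = Metric.hausdorffDist K (range g)} := by
  refine sInf_eq_sInf_of_subset_of_forall_exists_le_add ?_ ⟨0, ?_⟩ ?_
  · rintro e ⟨h, hpoly, -, hhU, he⟩
    exact ⟨h, hpoly, hhU, he⟩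
  · rintro _ ⟨g, -, -, rfl⟩
    exact Metric.hausdorffDist_nonneg
  · rintro _ ⟨g, hpoly, hgU, rfl⟩ ε hε
    have hg := hpoly.continuous
    obtain ⟨h, hh, hinj, hhU, hgh⟩ :=
      exists_isPolygonalCurve_injective_hausdorffDist_le hE hU hg hgU hε
    have hfin := Metric.hausdorffEDist_ne_top_of_nonempty_of_bounded hK_nonempty
      (range_nonempty g) hK (isCompact_range hg).isBounded
    exact ⟨_, ⟨h, hh, hinj, hhU, rfl⟩, (Metric.hausdorffDist_triangle hfin).trans (by gcongr)⟩

/-- Under the Hausdorff distance, the optimal value of the simple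
curve embedding problem (infimum over simple polygonal curves in `U`) equals the
optimal value of the unrestricted curve embedding problem (infimum over
polygonal curves in `U`). -/
theorem simple_curve_embedding_hausdorff_eq
    (U : Set (EuclideanSpace ℝ (Fin 2))) (hU : IsOpen U)
    (f : unitInterval → EuclideanSpace ℝ (Fin 2)) (hf : IsPolygonal f) :
    sInf {e : ℝ | ∃ h : unitInterval → EuclideanSpace ℝ (Fin 2),
        IsPolygonal h ∧ Function.Injective h ∧ Set.range h ⊆ U ∧
        e = Metric.hausdorffDist (Set.range f) (Set.range h)} =
    sInf {e : ℝ | ∃ g : unitInterval → EuclideanSpace ℝ (Fin 2),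
        IsPolygonal g ∧ Set.range g ⊆ U ∧
        e = Metric.hausdorffDist (Set.range f) (Set.range g)} := by
  have hf_cont : Continuous f := IsPolygonalCurve.continuous hf
  exact simple_curve_embedding_hausdorff_eq_general (by simp) hU
    (isCompact_range hf_cont).isBounded (range_nonempty f)
end
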